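/- (Truncation resilience for P1.) If L ∈ valid A n B, Suc i < len L and cons M (trunc(L, Suc i)) ∈ valid A n B, then shop M = shop (ith(L, i)); i.e. a valid chain can be truncated only at an offer whose author is the author of the offer placed on top of the truncation. -/

import Mathlib

inductive agent : Type
  | Server : agent
  | Friend : ℕ → agent
  | Spy : agent
deriving DecidableEq

inductive msg : Type
  | Agent : agent → msg
  | Number : ℕ → msg
  | Nonce : ℕ → msg
  | Key : ℕ → msg
  | Hash : msg → msg
  | MPair : msg → msg → msg
  | Crypt : ℕ → msg → msg
deriving DecidableEq

inductive partsP (H : Set msg) : msg → Prop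
  | Inj : ∀ X, X ∈ H → partsP H X
  | Fst : ∀ X Y, partsP H (msg.MPair X Y) → partsP H X
  | Snd : ∀ X Y, partsP H (msg.MPair X Y) → partsP H Y
  | Body : ∀ K X, partsP H (msg.Crypt K X) → partsP H X

/-- `parts H`: sub-components of messages of `H`. -/
def parts (H : Set msg) : Set msg := {X | partsP H X}

inductive analzP (invKey : ℕ → ℕ) (H : Set msg) : msg → Prop
  | Inj : ∀ X, X ∈ H → analzP invKey H X
  | Fst : ∀ X Y, analzP invKey H (msg.MPair X Y) → analzP invKey H X
  | Snd : ∀ X Y, analzP invKey H (msg.MPair X Y) → analzP invKey H Y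
  | Decrypt : ∀ K X, analzP invKey H (msg.Crypt K X) →
      analzP invKey H (msg.Key (invKey K)) → analzP invKey H X

/-- `analz invKey H`: what can be obtained by decomposing and decrypting messages of `H`. -/
def analz (invKey : ℕ → ℕ) (H : Set msg) : Set msg := {X | analzP invKey H X}

inductive synthP (H : Set msg) : msg → Prop
  | Inj : ∀ X, X ∈ H → synthP H X
  | Ag : ∀ a, synthP H (msg.Agent a)
  | Num : ∀ n, synthP H (msg.Number n)
  | Hsh : ∀ X, synthP H X → synthP H (msg.Hash X)
  | Pr : ∀ X Y, synthP H X → synthP H Y → synthP H (msg.MPair X Y)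
  | Cry : ∀ K X, synthP H X → msg.Key K ∈ H → synthP H (msg.Crypt K X)

/-- `synth H`: messages that can be synthesized from `H`. -/
def synth (H : Set msg) : Set msg := {X | synthP H X}

inductive guardP (invKey : ℕ → ℕ) (n : ℕ) (Ks : Set ℕ) : msg → Prop
  | No_Nonce : ∀ X, msg.Nonce n ∉ parts {X} → guardP invKey n Ks X
  | Guard : ∀ K X, invKey K ∈ Ks → guardP invKey n Ks (msg.Crypt K X)
  | Cry : ∀ K X, guardP invKey n Ks X → guardP invKey n Ks (msg.Crypt K X)
  | Pr : ∀ X Y, guardP invKey n Ks X → guardP invKey n Ks Y →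
      guardP invKey n Ks (msg.MPair X Y)

/-- `guard n Ks`: messages in which `Nonce n` is guarded by the keys of `Ks`. -/
def guardMsg (invKey : ℕ → ℕ) (n : ℕ) (Ks : Set ℕ) : Set msg := {X | guardP invKey n Ks X}

/-- `Guard n Ks H`: every message of `H` lies in `guard n Ks`. -/
def Guard (invKey : ℕ → ℕ) (n : ℕ) (Ks : Set ℕ) (H : Set msg) : Prop :=
  ∀ X ∈ H, X ∈ guardMsg invKey n Ks
/-- The empty encoded list: a fixed atomic message. -/
def nilm : msg := msg.Number 0

/-- Cons on encoded lists. -/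
def consm (X L : msg) : msg := msg.MPair X L

/-- Head of an encoded list. -/
def headm : msg → msg
  | msg.MPair X _ => X
  | _ => nilm

/-- Tail of an encoded list. -/
def tailm : msg → msg
  | msg.MPair _ L => L
  | _ => nilm

/-- Length of an encoded list. -/
def lenm : msg → ℕ
  | msg.MPair _ L => lenm L + 1
  | _ => 0

/-- `ith L i` is the `i+1`-th element of `L`. -/
def ith : msg → ℕ → msg
  | L, 0 => headm L
  | L, i + 1 => ith (tailm L) i

/-- `repl L i M` is `L` with its `i+1`-th element replaced by `M`. -/
def repl : msg → ℕ → msg → msg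
  | msg.MPair _ L, 0, M => msg.MPair M L
  | msg.MPair X L, i + 1, M => msg.MPair X (repl L i M)
  | L, _, _ => L

/-- `insm L i M` is `L` with `M` inserted before the `i+1`-th element of `L`. -/
def insm : msg → ℕ → msg → msg
  | L, 0, M => msg.MPair M L
  | msg.MPair X L, i + 1, M => msg.MPair X (insm L i M)
  | L, _, _ => L

/-- `trunc L i` truncates the `i` first elements of `L`. -/
def trunc : msg → ℕ → msg
  | L, 0 => L
  | msg.MPair _ L, i + 1 => trunc L i
  | L, _ => L
/-- `sign B X = ⟨Agent B, X, Crypt (priK B) (Hash X)⟩`. -/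
def sign (invKey : ℕ → ℕ) (pubK : agent → ℕ) (B : agent) (X : msg) : msg :=
  msg.MPair (msg.Agent B) (msg.MPair X (msg.Crypt (invKey (pubK B)) (msg.Hash X)))

/-- The chaining relation of protocol P1. -/
def chain (invKey : ℕ → ℕ) (pubK : agent → ℕ) (B : agent) (ofr : ℕ) (A : agent)
    (L : msg) (C : agent) : msg :=
  sign invKey pubK B (msg.MPair (msg.Crypt (pubK A) (msg.Nonce ofr))
    (msg.Hash (msg.MPair (headm L) (msg.Agent C))))

/-- The start of the chaining relation. -/
def anchor (invKey : ℕ → ℕ) (pubK : agent → ℕ) (A : agent) (n : ℕ) (B : agent) : msg :=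
  chain invKey pubK A n A (consm nilm nilm) B

/-- The signer of an offer `chain B ofr A L C`, i.e. `Agent B`. -/
def shop (M : msg) : msg := headm M

/-- The designated next server of an offer `chain B ofr A L C`, i.e. `C`. -/
def next_shop : msg → agent
  | msg.MPair _ (msg.MPair (msg.MPair _ (msg.Hash (msg.MPair _ (msg.Agent C)))) _) => C
  | _ => agent.Server
/-- Valid chains of offers for protocol P1. -/
inductive validP (invKey : ℕ → ℕ) (pubK : agent → ℕ) (A : agent) (n : ℕ) (B : agent) :
    msg → Prop
  | Req : validP invKey pubK A n B (consm (anchor invKey pubK A n B) nilm)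
  | Prop : ∀ L ofr C, validP invKey pubK A n B L →
      validP invKey pubK A n B
        (consm (chain invKey pubK (next_shop (headm L)) ofr A L C) L)

def valid (invKey : ℕ → ℕ) (pubK : agent → ℕ) (A : agent) (n : ℕ) (B : agent) : Set msg :=
  {L | validP invKey pubK A n B L}

/-- Truncation resilience for P1: a valid chain can be truncated only at an
offer whose author is the author of the offer placed on top of the truncation. -/
theorem truncation_resilience
    (invKey : ℕ → ℕ) (pubK : agent → ℕ)
    (hinv : ∀ K, invKey (invKey K) = K)
    (A B : agent) (n : ℕ) (L M : msg) (i : ℕ)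
    (hL : L ∈ valid invKey pubK A n B)
    (hlen : i + 1 < lenm L)
    (htr : consm M (trunc L (i + 1)) ∈ valid invKey pubK A n B) :
    shop M = shop (ith L i) := by
  induction i generalizing L with
  | zero =>
    rcases hL with _ | ⟨L, ofr, C, h⟩
    · simp [consm, lenm, nilm] at hlen
    · simp only [consm, trunc] at htr
      have key : ∀ N, validP invKey pubK A n B N → N = msg.MPair M L →
          shop M = msg.Agent (next_shop (headm L)) := by
        intro N hN e
        rcases hN with _ | ⟨L', ofr', C', h'⟩
        · simp only [consm, msg.MPair.injEq] at e
          rw [← e.2] at hlen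
          simp [consm, lenm, nilm] at hlen
        · simp only [consm, msg.MPair.injEq] at e
          rw [← e.1, ← e.2]
          rfl
      rw [key _ htr rfl]
      rfl
  | succ i ih =>
    rcases hL with _ | ⟨L, ofr, C, h⟩
    · simp [consm, lenm, nilm] at hlen
    · exact ih L h (by simp only [consm, lenm] at hlen; omega) htr
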